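/- arXiv:2211.04891 — 2 statements merged into one kernel-verified Lean document; each statement's English description precedes it below -/
import Mathlib

section
/- In the obstacle-problem setting, the discrete cluster Λ = {a ∈ cl(V) : w(a) > φ(a)} is contained in V, the obstacle-problem solution w satisfies Δw(a) = 𝔯(a) for every a ∈ Λ, and 0 ≤ Δw(a) ≤ 𝔯(a) for every a ∈ V. -/
/-!
The class of admissible functions is closed under pointwise infima, so the solution `w` is itself
admissible (`obstSol_admissible`); in particular `Δw ≤ r` on `Vs`. The zero function is admissible,
so `w ≤ 0 = φ` on the boundary, which puts the cluster inside `Vs`.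

If `w a > φ a` and `Δw(a) < r a` at some `a ∈ Vs`, lowering the value of `w` at `a` by a small
`ε > 0` keeps it admissible: the Laplacian at `a` grows by `ε` and does not increase elsewhere. This
contradicts minimality, so `Δw = r` on the cluster. At a vertex of `Vs` off the cluster, `w` touches
`φ` from above, hence `Δw ≥ Δφ ≥ 0` there.
-/

open Finset

/-- Degree-normalized graph Laplacian:
`Δu(a) = (1/deg a) * ∑_{b ∼ a} (u b - u a)`. -/
noncomputable def lap {V : Type*} (G : SimpleGraph V) [∀ v : V, Fintype (G.neighborSet v)]
    (u : V → ℝ) (a : V) : ℝ :=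
  (1 / (G.degree a : ℝ)) * ∑ b ∈ G.neighborFinset a, (u b - u a)

/-- Outer vertex boundary of a finite set of vertices: vertices not in `A`
adjacent to some vertex of `A`. -/
def bdry {V : Type*} [DecidableEq V] (G : SimpleGraph V) [∀ v : V, Fintype (G.neighborSet v)]
    (A : Finset V) : Finset V :=
  (A.biUnion fun a => G.neighborFinset a) \ A

/-- Closure `cl(A) = A ∪ ∂A` of a finite set of vertices. -/
def clo {V : Type*} [DecidableEq V] (G : SimpleGraph V) [∀ v : V, Fintype (G.neighborSet v)]
    (A : Finset V) : Finset V :=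
  A ∪ bdry G A

/-- A function `u` is admissible for the discrete obstacle problem with threshold `r`
and obstacle `φ` on the vertex set `Vs` if `Δu ≤ r` on `Vs` and `u ≥ φ` on `cl(Vs)`. -/
def Admissible {V : Type*} [DecidableEq V] (G : SimpleGraph V)
    [∀ v : V, Fintype (G.neighborSet v)]
    (Vs : Finset V) (r φ u : V → ℝ) : Prop :=
  (∀ a ∈ Vs, lap G u a ≤ r a) ∧ ∀ b ∈ clo G Vs, φ b ≤ u b

/-- The solution of the discrete obstacle problem: the pointwise infimum over all
admissible functions. -/
noncomputable def obstSol {V : Type*} [DecidableEq V] (G : SimpleGraph V)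
    [∀ v : V, Fintype (G.neighborSet v)]
    (Vs : Finset V) (r φ : V → ℝ) (a : V) : ℝ :=
  sInf {x | ∃ u : V → ℝ, Admissible G Vs r φ u ∧ u a = x}

section Obstacle

variable {V : Type*} (G : SimpleGraph V) [∀ v : V, Fintype (G.neighborSet v)]

/-- The Laplacian as neighbour average minus value; this fails at an isolated vertex. -/
lemma lap_eq (u : V → ℝ) {a : V} (ha : 0 < G.degree a) :
    lap G u a = (1 / (G.degree a : ℝ)) * ∑ b ∈ G.neighborFinset a, u b - u a := by
  have h : (G.degree a : ℝ) ≠ 0 := by positivity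
  unfold lap
  rw [Finset.sum_sub_distrib, Finset.sum_const, SimpleGraph.card_neighborFinset_eq_degree,
    nsmul_eq_mul]
  field_simp

/-- Neighbour averages are monotone: `Δu(a) + u a` is the mean of `u` over the neighbours of `a`. -/
lemma lap_add_le (u v : V → ℝ) {a : V} (ha : 0 < G.degree a)
    (h : ∀ b ∈ G.neighborFinset a, u b ≤ v b) : lap G u a + u a ≤ lap G v a + v a := by
  rw [lap_eq G u ha, lap_eq G v ha, sub_add_cancel, sub_add_cancel]
  exact mul_le_mul_of_nonneg_left (Finset.sum_le_sum h) (by positivity)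

variable [DecidableEq V] {Vs : Finset V} {r φ : V → ℝ}

lemma mem_clo_of_mem {a : V} (ha : a ∈ Vs) : a ∈ clo G Vs :=
  Finset.mem_union_left _ ha

lemma mem_clo_of_adj {a b : V} (ha : a ∈ Vs) (hb : b ∈ G.neighborFinset a) : b ∈ clo G Vs := by
  by_cases h : b ∈ Vs
  · exact mem_clo_of_mem G h
  · exact Finset.mem_union_right _
      (Finset.mem_sdiff.2 ⟨Finset.mem_biUnion.2 ⟨a, ha, hb⟩, h⟩)

lemma obstSol_le {u : V → ℝ} (hu : Admissible G Vs r φ u) {a : V} (ha : a ∈ clo G Vs) :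
    obstSol G Vs r φ a ≤ u a := by
  refine csInf_le ⟨φ a, ?_⟩ ⟨u, hu, rfl⟩
  rintro x ⟨v, hv, rfl⟩
  exact hv.2 a ha

lemma zero_admissible (hr : ∀ a ∈ Vs, 0 < r a) (hφ0 : ∀ b ∈ clo G Vs, φ b ≤ 0) :
    Admissible G Vs r φ 0 :=
  ⟨fun a ha => by simpa [lap] using (hr a ha).le, hφ0⟩

lemma le_obstSol (h0 : Admissible G Vs r φ 0) {a : V} {c : ℝ}
    (h : ∀ u, Admissible G Vs r φ u → c ≤ u a) : c ≤ obstSol G Vs r φ a := by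
  refine le_csInf ⟨_, 0, h0, rfl⟩ ?_
  rintro x ⟨u, hu, rfl⟩
  exact h u hu

/-- The solution is admissible, since `Δu(a) ≤ r a` says that the neighbour average of `u` is at
most `u a + r a`, a condition preserved by pointwise infima. Its values off `cl(Vs)`, where the infimum
need not be finite, do not enter the definition of admissibility. -/
lemma obstSol_admissible (hdeg : ∀ a, 0 < G.degree a) (h0 : Admissible G Vs r φ 0) :
    Admissible G Vs r φ (obstSol G Vs r φ) := by
  refine ⟨fun a ha => ?_, fun b hb => le_obstSol G h0 fun u hu => hu.2 b hb⟩
  have key : lap G (obstSol G Vs r φ) a + obstSol G Vs r φ a - r a ≤ obstSol G Vs r φ a := by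
    refine le_obstSol G h0 fun u hu => ?_
    have h1 := lap_add_le G (obstSol G Vs r φ) u (hdeg a)
      fun b hb => obstSol_le G hu (mem_clo_of_adj G ha hb)
    linarith [hu.1 a ha]
  linarith

/-- Where the solution is strictly above the obstacle, the constraint `Δw ≤ r` is saturated. -/
lemma lap_obstSol_eq (hdeg : ∀ a, 0 < G.degree a) (h0 : Admissible G Vs r φ 0) {a : V}
    (ha : a ∈ Vs) (hlt : φ a < obstSol G Vs r φ a) : lap G (obstSol G Vs r φ) a = r a := by
  have hw := obstSol_admissible G hdeg h0
  set w := obstSol G Vs r φ with hwdef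
  refine le_antisymm (hw.1 a ha) ?_
  by_contra! hcon
  obtain ⟨ε, hε, hε1, hε2⟩ : ∃ ε > 0, ε ≤ w a - φ a ∧ ε ≤ r a - lap G w a :=
    ⟨min (w a - φ a) (r a - lap G w a), lt_min (by linarith) (by linarith),
      min_le_left _ _, min_le_right _ _⟩
  let v := Function.update w a (w a - ε)
  have hva : v a = w a - ε := Function.update_self ..
  have hvb : ∀ b, b ≠ a → v b = w b := fun b hb => Function.update_of_ne hb ..
  have hle : ∀ b, v b ≤ w b := by
    intro b
    by_cases hb : b = a
    · subst hb; linarith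
    · exact (hvb b hb).le
  have hv : Admissible G Vs r φ v := by
    refine ⟨fun b hb => ?_, fun b hb => ?_⟩
    · have h1 := lap_add_le G v w (hdeg b) fun c _ => hle c
      by_cases hba : b = a
      · subst hba; linarith
      · linarith [hvb b hba, hw.1 b hb]
    · by_cases hba : b = a
      · subst hba; linarith
      · rw [hvb b hba]; exact hw.2 b hb
  have := obstSol_le G hv (mem_clo_of_mem G ha)
  rw [← hwdef] at this
  linarith

end Obstacle

/-- **Laplacian of the obstacle-problem solution (Lemma A.3, first part).**
In the obstacle-problem setting, the discrete cluster
`Λ = {a ∈ cl(V) : w(a) > φ(a)}` is contained in `V`, the solution `w` satisfies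
`Δw = 𝔯` on `Λ`, and `0 ≤ Δw ≤ 𝔯` on `V`. -/
theorem obstacle_laplacian_bound {V : Type*} [DecidableEq V] [Infinite V]
    (G : SimpleGraph V) [∀ v : V, Fintype (G.neighborSet v)]
    (hG : G.Connected)
    (Vs : Finset V) (hVne : Vs.Nonempty)
    (hVconn : (G.induce (Vs : Set V)).Connected)
    (o : V) (ho : o ∈ Vs)
    (r : V → ℝ) (hr : ∀ a ∈ Vs, 0 < r a)
    (t : ℝ) (ht : 0 < t)
    (φ : V → ℝ)
    (hφ0 : ∀ b ∈ clo G Vs, φ b ≤ 0)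
    (hφlap : ∀ a ∈ Vs, lap G φ a = if a = o then t else 0)
    (hφbd : ∀ b ∈ bdry G Vs, φ b = 0) :
    (∀ a ∈ clo G Vs, φ a < obstSol G Vs r φ a → a ∈ Vs) ∧
    (∀ a ∈ clo G Vs, φ a < obstSol G Vs r φ a → lap G (obstSol G Vs r φ) a = r a) ∧
    (∀ a ∈ Vs, 0 ≤ lap G (obstSol G Vs r φ) a ∧ lap G (obstSol G Vs r φ) a ≤ r a) := by
  have hdeg : ∀ a, 0 < G.degree a := fun a => hG.preconnected.degree_pos_of_nontrivial a
  have h0 : Admissible G Vs r φ 0 := zero_admissible G hr hφ0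
  have hw := obstSol_admissible G hdeg h0
  have hsub : ∀ a ∈ clo G Vs, φ a < obstSol G Vs r φ a → a ∈ Vs := by
    intro a ha hlt
    rcases Finset.mem_union.1 ha with h | h
    · exact h
    · have h1 := obstSol_le G h0 ha
      rw [hφbd a h] at hlt
      exact absurd hlt h1.not_gt
  refine ⟨hsub, fun a ha hlt => lap_obstSol_eq G hdeg h0 (hsub a ha hlt) hlt,
    fun a ha => ⟨?_, hw.1 a ha⟩⟩
  rcases (hw.2 a (mem_clo_of_mem G ha)).lt_or_eq with hlt | heq
  · rw [lap_obstSol_eq G hdeg h0 ha hlt]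
    exact (hr a ha).le
  · have h1 := lap_add_le G φ (obstSol G Vs r φ) (hdeg a)
      fun b hb => hw.2 b (mem_clo_of_adj G ha hb)
    have h2 : 0 ≤ lap G φ a := by
      rw [hφlap a ha]
      split_ifs
      exacts [ht.le, le_rfl]
    linarith
end

section
/- In the obstacle-problem setting, assume that 𝔯(a) = 1/deg(a) for every a ∈ V and that the discrete cluster satisfies Λ ⊆ int(V), i.e. every vertex of Λ has all of its neighbors in V. Then the total mass identity Σ_{a ∈ V} Δw(a) · deg(a) = 𝔱 · deg(o) holds. -/
/-!
Put `v = w - φ`, where `w` is the obstacle solution. Since `w ≥ φ` on `cl(V)`, the function `v`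
vanishes on `cl(V)` away from the cluster `Λ ⊆ int(V)`. Hence in
`∑_{a ∈ V} deg(a) Δv(a) = ∑_{a ∈ V} ∑_{b ∼ a} (v b - v a)` only edges with both ends in `V`
contribute, and by symmetry the sum is zero (`sum_neighbor_sub_eq_zero`). Therefore `w` and `φ`
have the same total mass on `V`, and that of `φ` is `𝔱 · deg(o)` by hypothesis.
-/

open Finset

/-- The identity holds at isolated vertices too, where both sides vanish. -/
theorem lap_mul_degree {V : Type*} (G : SimpleGraph V) [∀ v : V, Fintype (G.neighborSet v)]
    (u : V → ℝ) (a : V) :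
    lap G u a * (G.degree a : ℝ) = ∑ b ∈ G.neighborFinset a, (u b - u a) := by
  unfold lap
  by_cases h : G.degree a = 0
  · have : G.neighborFinset a = ∅ := by
      rw [← Finset.card_eq_zero, G.card_neighborFinset_eq_degree, h]
    simp [this]
  · have : (G.degree a : ℝ) ≠ 0 := by exact_mod_cast h
    field_simp

theorem mem_clo_of_mem_s8 {V : Type*} [DecidableEq V] (G : SimpleGraph V)
    [∀ v : V, Fintype (G.neighborSet v)] {A : Finset V} {a : V} (ha : a ∈ A) : a ∈ clo G A :=
  Finset.mem_union_left _ ha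

theorem mem_clo_of_adj_s8 {V : Type*} [DecidableEq V] (G : SimpleGraph V)
    [∀ v : V, Fintype (G.neighborSet v)] {A : Finset V} {a b : V} (ha : a ∈ A)
    (hab : G.Adj a b) : b ∈ clo G A := by
  by_cases hb : b ∈ A
  · exact mem_clo_of_mem_s8 G hb
  · refine Finset.mem_union_right _ (Finset.mem_sdiff.2 ⟨Finset.mem_biUnion.2 ⟨a, ha, ?_⟩, hb⟩)
    simpa using hab

/-- The zero function is admissible, so the infimum defining the solution is over a nonempty set
and inherits the lower bound `φ`. -/
theorem le_obstSol_s8 {V : Type*} [DecidableEq V] (G : SimpleGraph V)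
    [∀ v : V, Fintype (G.neighborSet v)] (Vs : Finset V) (r φ : V → ℝ)
    (hr : ∀ a ∈ Vs, 0 < r a) (hφ0 : ∀ b ∈ clo G Vs, φ b ≤ 0) {a : V} (ha : a ∈ clo G Vs) :
    φ a ≤ obstSol G Vs r φ a := by
  refine le_csInf ⟨0, fun _ => 0, ⟨fun b hb => ?_, hφ0⟩, rfl⟩ ?_
  · simpa [lap] using (hr b hb).le
  · rintro x ⟨u, hu, rfl⟩
    exact hu.2 a ha

/-- No mass leaves `A` when the part of the support of `v` in `cl(A)` lies in `int(A)`. -/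
theorem sum_neighbor_sub_eq_zero {V : Type*} [DecidableEq V] (G : SimpleGraph V)
    [∀ v : V, Fintype (G.neighborSet v)] (A : Finset V) (v : V → ℝ)
    (hv : ∀ a ∈ clo G A, v a ≠ 0 → a ∈ A ∧ ∀ b : V, G.Adj a b → b ∈ A) :
    ∑ a ∈ A, ∑ b ∈ G.neighborFinset a, (v b - v a) = 0 := by
  simp only [Finset.sum_sub_distrib]
  rw [sub_eq_zero]
  -- Both double sums may be restricted to pairs of adjacent vertices of `A`.
  have h1 : ∀ a ∈ A, ∑ b ∈ G.neighborFinset a with b ∈ A, v b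
      = ∑ b ∈ G.neighborFinset a, v b := fun a ha =>
    Finset.sum_filter_of_ne fun b hb hne =>
      (hv b (mem_clo_of_adj_s8 G ha (by simpa using hb)) hne).1
  have h2 : ∀ a ∈ A, ∑ b ∈ G.neighborFinset a with b ∈ A, v a
      = ∑ b ∈ G.neighborFinset a, v a := fun a ha =>
    Finset.sum_filter_of_ne fun b hb hne =>
      (hv a (mem_clo_of_mem_s8 G ha) hne).2 b (by simpa using hb)
  rw [← Finset.sum_congr rfl h1, ← Finset.sum_congr rfl h2]
  refine Finset.sum_comm' fun a b => ?_
  simp only [Finset.mem_filter, SimpleGraph.mem_neighborFinset, G.adj_comm a b]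
  tauto

/-- **Conservation of mass, exact identity (Lemma A.4, second part).**
In the obstacle-problem setting with threshold `𝔯 = 1/deg` on `V`, if the discrete
cluster `Λ = {a ∈ cl(V) : w(a) > φ(a)}` is contained in the interior of `V` (every
vertex of `Λ` has all of its neighbors in `V`), then
`Σ_{a ∈ V} Δw(a)·deg(a) = 𝔱·deg(o)`. -/
theorem obstacle_mass_identity {V : Type*} [DecidableEq V] [Infinite V]
    (G : SimpleGraph V) [∀ v : V, Fintype (G.neighborSet v)]
    (hG : G.Connected)
    (Vs : Finset V) (hVne : Vs.Nonempty)
    (hVconn : (G.induce (Vs : Set V)).Connected)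
    (o : V) (ho : o ∈ Vs)
    (r : V → ℝ) (hr : ∀ a ∈ Vs, 0 < r a)
    (t : ℝ) (ht : 0 < t)
    (φ : V → ℝ)
    (hφ0 : ∀ b ∈ clo G Vs, φ b ≤ 0)
    (hφlap : ∀ a ∈ Vs, lap G φ a = if a = o then t else 0)
    (hφbd : ∀ b ∈ bdry G Vs, φ b = 0)
    (hrdeg : ∀ a ∈ Vs, r a = 1 / (G.degree a : ℝ))
    (hint : ∀ a ∈ clo G Vs, φ a < obstSol G Vs r φ a →
      a ∈ Vs ∧ ∀ b : V, G.Adj a b → b ∈ Vs) :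
    ∑ a ∈ Vs, lap G (obstSol G Vs r φ) a * (G.degree a : ℝ)
      = t * (G.degree o : ℝ) := by
  set w := obstSol G Vs r φ with hw
  have hzero : ∑ a ∈ Vs, ∑ b ∈ G.neighborFinset a, ((w b - φ b) - (w a - φ a)) = 0 := by
    refine sum_neighbor_sub_eq_zero G Vs (fun a => w a - φ a) fun a ha hne => hint a ha ?_
    exact lt_of_le_of_ne (le_obstSol_s8 G Vs r φ hr hφ0 ha) fun h => hne (sub_eq_zero.2 h.symm)
  have hφsum : ∑ a ∈ Vs, lap G φ a * (G.degree a : ℝ) = t * (G.degree o : ℝ) := by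
    rw [Finset.sum_congr rfl fun a ha => by rw [hφlap a ha]]
    simp [ite_mul, ho]
  rw [← hφsum, ← sub_eq_zero, ← Finset.sum_sub_distrib, ← hzero]
  refine Finset.sum_congr rfl fun a _ => ?_
  rw [lap_mul_degree, lap_mul_degree, ← Finset.sum_sub_distrib]
  exact Finset.sum_congr rfl fun b _ => by ring
end
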